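/- Let n ≥ 2 and let u be a smooth function on a neighborhood of the closed unit ball B ⊂ ℝ^{n+1} which is harmonic in the interior of B (Δu = 0). Then ∫_B u·⟨∇u, ∇(|x|²)⟩ dx = ∫_B (1 − |x|²)·|∇u(x)|² dx ≥ 0. Consequently, if in addition u > 0 on B and −∫_B u·⟨∇u, ∇(|x|²)⟩ dx ≥ (2/(n−1))·∫_B |∇u|² dx, then u is constant. (This is the key step in the Frank–Lieb-style proof that the only positive local minimizers in Escobar's sharp Sobolev trace inequality are the constants, up to the conformal group.) -/

import Mathlib

open MeasureTheory Metric

noncomputable section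

local notation "⟪" x ", " y "⟫" => @inner ℝ _ _ x y

abbrev Euc (m : ℕ) : Type := EuclideanSpace ℝ (Fin m)

variable {m : ℕ}

def stdv (m : ℕ) (i : Fin m) : Euc m := EuclideanSpace.single i (1 : ℝ)

def grad (u : Euc m → ℝ) (x : Euc m) : Euc m := gradient u x

def hessVec (u : Euc m → ℝ) (x v : Euc m) : Euc m := fderiv ℝ (gradient u) x v

def hess (u : Euc m → ℝ) (x v w : Euc m) : ℝ := ⟪hessVec u x v, w⟫

def lap (u : Euc m → ℝ) (x : Euc m) : ℝ := ∑ i, hess u x (stdv m i) (stdv m i)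

def hessNormSq (u : Euc m → ℝ) (x : Euc m) : ℝ :=
  ∑ i, ∑ j, (hess u x (stdv m i) (stdv m j)) ^ 2

def divg (V : Euc m → Euc m) (x : Euc m) : ℝ :=
  ∑ i, fderiv ℝ (fun y => V y i) x (stdv m i)

def etaD (u : Euc m → ℝ) (x : Euc m) : ℝ := ⟪x, grad u x⟫

def tgrad (u : Euc m → ℝ) (x : Euc m) : Euc m := grad u x - etaD u x • x

def SmoothNearBall (u : Euc m → ℝ) : Prop :=
  ∃ U : Set (Euc m), IsOpen U ∧ closedBall (0 : Euc m) 1 ⊆ U ∧ ContDiffOn ℝ (⊤ : ℕ∞) u U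

/-- boundary Laplacian on the unit sphere `Sⁿ ⊂ ℝⁿ⁺¹` -/
def blap (n : ℕ) (u : Euc (n+1) → ℝ) (x : Euc (n+1)) : ℝ :=
  lap u x - (n : ℝ) * etaD u x - hess u x x x

def sigma1 (n : ℕ) (u : Euc (n+1) → ℝ) (x : Euc (n+1)) : ℝ :=
  -(((n:ℝ)-3)/4) * u x * lap u x - (((n:ℝ)+1)/4) * ‖grad u x‖^2

/-- the tensor `T₁(u)` as a bilinear form -/
def T1b (n : ℕ) (u : Euc (n+1) → ℝ) (x v w : Euc (n+1)) : ℝ :=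
  (sigma1 n u x + (1/2) * ‖grad u x‖^2) * ⟪v, w⟫
    + (((n:ℝ)-3)/4) * u x * hess u x v w
    - (((n:ℝ)+1)/4) * ⟪grad u x, v⟫ * ⟪grad u x, w⟫

/-- the tensor `T₁(u)` applied to a vector, i.e. the vector `T₁(u)(·,X)` -/
def T1app (n : ℕ) (u : Euc (n+1) → ℝ) (x X : Euc (n+1)) : Euc (n+1) :=
  (sigma1 n u x + (1/2) * ‖grad u x‖^2) • X
    + ((((n:ℝ)-3)/4) * u x) • hessVec u x X
    - ((((n:ℝ)+1)/4) * ⟪grad u x, X⟫) • grad u x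

def Hb (n : ℕ) (u : Euc (n+1) → ℝ) (x : Euc (n+1)) : ℝ :=
  etaD u x + (((n:ℝ)-3)/4) * u x

def L4 (n : ℕ) (u : Euc (n+1) → ℝ) (x : Euc (n+1)) : ℝ :=
  (((n:ℝ)-3)/8) * u x * (lap u x)^2 - (((n:ℝ)-3)/8) * u x * hessNormSq u x
    + (((n:ℝ)-1)/4) * ‖grad u x‖^2 * lap u x
    + (((n:ℝ)+1)/4) * hess u x (grad u x) (grad u x)

def B3 (n : ℕ) (u : Euc (n+1) → ℝ) (x : Euc (n+1)) : ℝ :=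
  Hb n u x * T1b n u x x x + ((n:ℝ)/3) * (Hb n u x)^3

def E2 (n : ℕ) (u : Euc (n+1) → ℝ) : ℝ :=
  (∫ x in closedBall (0 : Euc (n+1)) 1, u x * L4 n u x)
    + ∫ x in sphere (0 : Euc (n+1)) 1, u x * B3 n u x ∂μH[(n:ℝ)]

/-- total surface measure of the sphere `Sⁿ ⊂ ℝⁿ⁺¹` -/
def omegaN (n : ℕ) : ℝ := (μH[(n:ℝ)] (sphere (0 : Euc (n+1)) 1)).toReal

def memC1 (n : ℕ) (u : Euc (n+1) → ℝ) : Prop :=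
  SmoothNearBall u ∧ (∀ x ∈ closedBall (0 : Euc (n+1)) 1, 0 ≤ sigma1 n u x)
    ∧ ∀ x ∈ sphere (0 : Euc (n+1)) 1, 0 < Hb n u x

def memV (n : ℕ) (u : Euc (n+1) → ℝ) : Prop :=
  SmoothNearBall u ∧ (∀ x ∈ closedBall (0 : Euc (n+1)) 1, 0 < u x)
    ∧ (∫ x in sphere (0 : Euc (n+1)) 1, u x ^ ((4*(n:ℝ))/((n:ℝ)-3)) ∂μH[(n:ℝ)]) = omegaN n

/-- the normalized path `u_t` through `u` in the direction `v` -/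
def pathU (n : ℕ) (u v : Euc (n+1) → ℝ) (t : ℝ) : Euc (n+1) → ℝ :=
  fun x => omegaN n ^ (((n:ℝ)-3)/(4*(n:ℝ)))
    * ((∫ y in sphere (0 : Euc (n+1)) 1,
          |(1 + t * v y) * u y| ^ ((4*(n:ℝ))/((n:ℝ)-3)) ∂μH[(n:ℝ)]) ^ (((n:ℝ)-3)/(4*(n:ℝ))))⁻¹
    * ((1 + t * v x) * u x)

/-- `u` is a local minimizer of `E₂ : V → ℝ` -/
def IsLocalMinE2 (n : ℕ) (u : Euc (n+1) → ℝ) : Prop :=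
  ∀ v : Euc (n+1) → ℝ, SmoothNearBall v →
    IsLocalMin (fun t : ℝ => E2 n (pathU n u v t)) 0

/-- the polarization `L₄(w,u,u)` -/
def L4pol (n : ℕ) (u w : Euc (n+1) → ℝ) (x : Euc (n+1)) : ℝ :=
  (1/3) * deriv (fun t : ℝ => L4 n (fun y => u y + t * w y) x) 0

/-- the polarization `B₃(w,u,u)` -/
def B3pol (n : ℕ) (u w : Euc (n+1) → ℝ) (x : Euc (n+1)) : ℝ :=
  (1/3) * deriv (fun t : ℝ => B3 n (fun y => u y + t * w y) x) 0

/- ### four-dimensional (critical) objects -/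

def L43 (u v w : Euc 4 → ℝ) (x : Euc 4) : ℝ :=
  divg (fun y => ⟪grad u y, grad v y⟫ • grad w y
    + ⟪grad u y, grad w y⟫ • grad v y
    + ⟪grad v y, grad w y⟫ • grad u y) x

def L42 (u v : Euc 4 → ℝ) (x : Euc 4) : ℝ :=
  -(1/2) * (lap (fun y => ⟪grad u y, grad v y⟫) x
    - divg (fun y => lap u y • grad v y + lap v y • grad u y) x)

def B33 (u v w : Euc 4 → ℝ) (x : Euc 4) : ℝ :=
  -(⟪grad u x, grad v x⟫ * etaD w x + ⟪grad u x, grad w x⟫ * etaD v x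
    + ⟪grad v x, grad w x⟫ * etaD u x)

def B32 (u v : Euc 4 → ℝ) (x : Euc 4) : ℝ :=
  -(blap 3 u x * etaD v x + blap 3 v x * etaD u x)
    - ⟪tgrad u x, tgrad v x⟫ - 3 * etaD u x * etaD v x

def B31 (u : Euc 4 → ℝ) (x : Euc 4) : ℝ := -(blap 3 u x)

/-- total surface measure of `S³ ⊂ ℝ⁴` -/
def omega3 : ℝ := (μH[(3:ℝ)] (sphere (0 : Euc 4) 1)).toReal

def F2 (u : Euc 4 → ℝ) : ℝ :=
  -(1/4) * (∫ x in closedBall (0 : Euc 4) 1,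
      ((1/2) * ‖grad u x‖^4 + ‖grad u x‖^2 * lap u x))
    + ∫ x in sphere (0 : Euc 4) 1,
      ((1/4) * ‖tgrad u x‖^2 * etaD u x + (1/12) * (etaD u x)^3
        + (1/2) * ‖tgrad u x‖^2 + u x) ∂μH[(3:ℝ)]

def G2 (u : Euc 4 → ℝ) : ℝ :=
  F2 u - (omega3/3) * Real.log
    ((∫ x in sphere (0 : Euc 4) 1, Real.exp (3 * u x) ∂μH[(3:ℝ)]) / omega3)

def memC1crit (u : Euc 4 → ℝ) : Prop :=
  SmoothNearBall u ∧ (∀ x ∈ closedBall (0 : Euc 4) 1, 0 ≤ -lap u x - ‖grad u x‖^2)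
    ∧ ∀ x ∈ sphere (0 : Euc 4) 1, 0 < etaD u x + 1

/-- `u` is a local minimizer of `G₂ : C^∞(B) → ℝ` -/
def IsLocalMinG2 (u : Euc 4 → ℝ) : Prop :=
  ∀ v : Euc 4 → ℝ, SmoothNearBall v →
    IsLocalMin (fun t : ℝ => G2 (fun x => u x + t * v x)) 0

/-- the critical (four-dimensional) `σ₁` -/
def sigma1c (u : Euc 4 → ℝ) (x : Euc 4) : ℝ := -lap u x - ‖grad u x‖^2

/-- the critical (four-dimensional) `T₁(u)` as a bilinear form -/
def T1c (u : Euc 4 → ℝ) (x v w : Euc 4) : ℝ :=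
  hess u x v w - ⟪grad u x, v⟫ * ⟪grad u x, w⟫
    - (lap u x + (1/2) * ‖grad u x‖^2) * ⟪v, w⟫

open scoped Topology in
lemma exists_cutoff (u : Euc m → ℝ) (hu : SmoothNearBall u) :
    ∃ v : Euc m → ℝ, ContDiff ℝ (⊤ : ℕ∞) v ∧ HasCompactSupport v ∧
      ∀ x ∈ closedBall (0 : Euc m) 1, u =ᶠ[𝓝 x] v := by
  obtain ⟨U, hU, hBU, hd⟩ := hu
  obtain ⟨δ, hδ, hsub⟩ := (isCompact_closedBall (0 : Euc m) 1).exists_cthickening_subset_open hU hBU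
  rw [cthickening_closedBall hδ.le zero_le_one] at hsub
  let b : ContDiffBump (0 : Euc m) := ⟨1 + δ/2, δ + 1, by positivity, by linarith⟩
  refine ⟨fun x => b x * u x, ?_, ?_, ?_⟩
  · rw [contDiff_iff_contDiffAt]
    intro x
    by_cases hx : x ∈ U
    · exact b.contDiff.contDiffAt.mul (hd.contDiffAt (hU.mem_nhds hx))
    · have hx' : x ∉ tsupport b := by
        rw [b.tsupport_eq]
        exact fun h => hx (hsub h)
      have h0 : (fun x => b x * u x) =ᶠ[𝓝 x] fun _ => 0 := by
        filter_upwards [notMem_tsupport_iff_eventuallyEq.1 hx'] with y hy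
        simp [hy]
      exact contDiffAt_const.congr_of_eventuallyEq h0
  · exact b.hasCompactSupport.mul_right
  · intro x hx
    have : ball (0 : Euc m) (1 + δ/2) ∈ 𝓝 x := isOpen_ball.mem_nhds
      (by rw [mem_closedBall] at hx; rw [mem_ball]; linarith)
    filter_upwards [this] with y hy
    rw [b.one_of_mem_closedBall (ball_subset_closedBall hy), one_mul]

def wt (x : Euc m) : ℝ := max 0 (1 - ‖x‖^2)

lemma wt_lip : LipschitzWith 2 (wt (m := m)) := by
  have key : ∀ x y : Euc m, wt x - wt y ≤ 2 * ‖x - y‖ := by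
    intro x y
    have h1 : ‖y‖ - ‖x‖ ≤ ‖x - y‖ := by
      rw [norm_sub_rev]; exact norm_sub_norm_le y x
    have h0 := norm_nonneg (x - y)
    have hx := norm_nonneg x
    have hy := norm_nonneg y
    unfold wt
    rcases le_total (‖x‖) 1 with hx1 | hx1
    · rw [max_eq_right (by nlinarith)]
      rcases le_total (‖y‖) 1 with hy1 | hy1
      · rw [max_eq_right (by nlinarith)]
        rcases le_total (‖y‖) (‖x‖) with h | h <;> nlinarith
      · rw [max_eq_left (by nlinarith)]
        nlinarith
    · rw [max_eq_left (by nlinarith)]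
      have := le_max_left 0 (1 - ‖y‖^2)
      linarith
  apply LipschitzWith.of_dist_le_mul
  intro x y
  rw [Real.dist_eq, dist_eq_norm, abs_le]
  have h1 := key x y
  have h2 := key y x
  rw [norm_sub_rev] at h2
  constructor <;> simp <;> linarith

lemma wt_of_mem {x : Euc m} (hx : x ∈ closedBall (0 : Euc m) 1) : wt x = 1 - ‖x‖^2 := by
  rw [mem_closedBall_zero_iff] at hx
  exact max_eq_right (by nlinarith [norm_nonneg x])

lemma wt_of_notMem {x : Euc m} (hx : x ∉ closedBall (0 : Euc m) 1) : wt x = 0 := by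
  rw [mem_closedBall_zero_iff] at hx
  exact max_eq_left (by nlinarith [norm_nonneg x])

lemma wt_supp : HasCompactSupport (wt (m := m)) :=
  HasCompactSupport.intro (isCompact_closedBall (0 : Euc m) 1) fun _ hx => wt_of_notMem hx

open scoped Topology in
lemma ibp (n : ℕ) (F : Euc (n+1) → ℝ) (hF : ContDiff ℝ 1 F) (hFc : HasCompactSupport F)
    (w : Euc (n+1)) :
    ∫ x in closedBall (0 : Euc (n+1)) 1, (1 - ‖x‖^2) * fderiv ℝ F x w
      = ∫ x in closedBall (0 : Euc (n+1)) 1, (2 * ⟪x, w⟫) * F x := by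
  obtain ⟨C, hC⟩ := ContDiff.lipschitzWith_of_hasCompactSupport hFc hF one_ne_zero
  have h := hC.integral_lineDeriv_mul_eq (μ := volume) wt_lip wt_supp w
  rw [← integral_indicator measurableSet_closedBall, ← integral_indicator measurableSet_closedBall]
  convert h using 1
  · congr 1
    ext x
    rw [(hF.differentiable one_ne_zero).differentiableAt.lineDeriv_eq_fderiv]
    by_cases hx : x ∈ closedBall (0 : Euc (n+1)) 1
    · rw [Set.indicator_of_mem hx, wt_of_mem hx, mul_comm]
    · rw [Set.indicator_of_notMem hx, wt_of_notMem hx, mul_zero]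
  · apply integral_congr_ae
    have hs : ∀ᵐ x : Euc (n+1), x ∉ sphere (0 : Euc (n+1)) 1 := by
      rw [← MeasureTheory.measure_eq_zero_iff_ae_notMem]
      exact Measure.addHaar_sphere volume _ _
    filter_upwards [hs] with x hx
    by_cases hx1 : x ∈ closedBall (0 : Euc (n+1)) 1
    · rw [Set.indicator_of_mem hx1]
      have hx2 : x ∈ ball (0 : Euc (n+1)) 1 := by
        rw [mem_ball]
        exact lt_of_le_of_ne hx1 hx
      have he : wt =ᶠ[𝓝 x] fun y : Euc (n+1) => 1 - ‖y‖^2 := by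
        filter_upwards [isOpen_ball.mem_nhds hx2] with y hy
        exact wt_of_mem (ball_subset_closedBall hy)
      have hd : HasFDerivAt (fun y : Euc (n+1) => 1 - ‖y‖^2) (-(2 • innerSL ℝ x)) x := by
        exact (hasStrictFDerivAt_norm_sq x).hasFDerivAt.const_sub 1
      have := (hd.congr_of_eventuallyEq he).hasLineDerivAt (-w)
      rw [this.lineDeriv]
      simp
    · rw [Set.indicator_of_notMem hx1]
      have he : wt =ᶠ[𝓝 x] fun y : Euc (n+1) => (0:ℝ) := by
        filter_upwards [isClosed_closedBall.isOpen_compl.mem_nhds hx1] with y hy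
        exact wt_of_notMem hy
      have := ((hasFDerivAt_const (𝕜 := ℝ) (0:ℝ) x).congr_of_eventuallyEq he).hasLineDerivAt (-w)
      rw [this.lineDeriv]
      simp

lemma grad_inner (v : Euc m → ℝ) (x w : Euc m) : ⟪grad v x, w⟫ = fderiv ℝ v x w := by
  unfold grad
  exact inner_gradient_left

lemma contDiff_grad (v : Euc m → ℝ) (hv : ContDiff ℝ (⊤ : ℕ∞) v) : ContDiff ℝ 1 (grad v) := by
  have : grad v = fun x => (InnerProductSpace.toDual ℝ (Euc m)).symm (fderiv ℝ v x) := by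
    ext1 x; rfl
  rw [this]
  exact (InnerProductSpace.toDual ℝ (Euc m)).symm.contDiff.comp
    ((hv.of_le (m := 2) (WithTop.coe_le_coe.2 le_top)).fderiv_right (m := 1) (by norm_num))

lemma inner_stdv (y : Euc m) (i : Fin m) : ⟪y, stdv m i⟫ = y i := by
  unfold stdv
  rw [EuclideanSpace.inner_single_right]
  simp

lemma main_id (n : ℕ) (v : Euc (n+1) → ℝ) (hv : ContDiff ℝ (⊤ : ℕ∞) v)
    (hvc : HasCompactSupport v) (hharm : ∀ x ∈ ball (0 : Euc (n+1)) 1, lap v x = 0) :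
    (∫ x in closedBall (0 : Euc (n+1)) 1, v x * ⟪grad v x, (2:ℝ) • x⟫)
        = ∫ x in closedBall (0 : Euc (n+1)) 1, (1 - ‖x‖^2) * ‖grad v x‖^2 := by
  have hg := contDiff_grad v hv
  have hv1 : ContDiff ℝ 1 v := hv.of_le (by exact_mod_cast le_top)
  have hgi : ∀ i, ContDiff ℝ 1 (fun x => ⟪grad v x, stdv (n+1) i⟫) := fun i =>
    hg.inner ℝ contDiff_const
  let F : Fin (n+1) → Euc (n+1) → ℝ := fun i x => v x * ⟪grad v x, stdv (n+1) i⟫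
  have hF : ∀ i, ContDiff ℝ 1 (F i) := fun i => hv1.mul (hgi i)
  have hFc : ∀ i, HasCompactSupport (F i) := fun i => hvc.mul_right
  have key := fun i => ibp n (F i) (hF i) (hFc i) (stdv (n+1) i)
  have hcont : ∀ i, Continuous fun x => fderiv ℝ (F i) x (stdv (n+1) i) := fun i =>
    ((hF i).continuous_fderiv one_ne_zero).clm_apply continuous_const
  have int1 : ∀ i, IntegrableOn (fun x => (1 - ‖x‖^2) * fderiv ℝ (F i) x (stdv (n+1) i))
      (closedBall (0 : Euc (n+1)) 1) := fun i => by
    refine ContinuousOn.integrableOn_compact (isCompact_closedBall _ _) (Continuous.continuousOn ?_)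
    have := hcont i
    fun_prop
  have int2 : ∀ i, IntegrableOn (fun x => (2 * ⟪x, stdv (n+1) i⟫) * F i x)
      (closedBall (0 : Euc (n+1)) 1) := fun i => by
    refine ContinuousOn.integrableOn_compact (isCompact_closedBall _ _) (Continuous.continuousOn ?_)
    have := (hF i).continuous
    fun_prop
  have hsum : ∑ i, _ = ∑ i, _ := Finset.sum_congr rfl fun i _ => key i
  rw [← integral_finsetSum _ fun i _ => int1 i, ← integral_finsetSum _ fun i _ => int2 i] at hsum
  have hae : (volume : Measure (Euc (n+1))).restrict (closedBall 0 1)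
      = volume.restrict (ball (0 : Euc (n+1)) 1) :=
    Measure.restrict_congr_set ((Filter.EventuallyEq.symm (by
        have hs : ∀ᵐ x : Euc (n+1), x ∉ sphere (0 : Euc (n+1)) 1 := by
          rw [← MeasureTheory.measure_eq_zero_iff_ae_notMem]
          exact Measure.addHaar_sphere volume _ _
        filter_upwards [hs] with x hx
        apply propext
        change dist x 0 < 1 ↔ dist x 0 ≤ 1
        exact ⟨le_of_lt, fun h => lt_of_le_of_ne h hx⟩)))
  have hd : ∀ x i, fderiv ℝ (F i) x (stdv (n+1) i)
      = (grad v x i)^2 + v x * hess v x (stdv (n+1) i) (stdv (n+1) i) := by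
    intro x i
    have h1 := (hv1.differentiable one_ne_zero x).hasFDerivAt
    have h2 : HasFDerivAt (grad v) (fderiv ℝ (grad v) x) x :=
      (hg.differentiable one_ne_zero x).hasFDerivAt
    have h3 := h2.inner ℝ (hasFDerivAt_const (stdv (n+1) i) x)
    have h4 := h1.mul h3
    rw [show F i = fun x => v x * ⟪grad v x, stdv (n+1) i⟫ from rfl]
    erw [h4.fderiv]
    simp only [ContinuousLinearMap.add_apply, ContinuousLinearMap.smul_apply, smul_eq_mul,
      ContinuousLinearMap.comp_apply, fderivInnerCLM_apply, ContinuousLinearMap.prod_apply,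
      ContinuousLinearMap.zero_apply, inner_zero_right, zero_add]
    simp only [← grad_inner, inner_stdv]
    have : hess v x (stdv (n+1) i) (stdv (n+1) i)
      = ⟪fderiv ℝ (grad v) x (stdv (n+1) i), stdv (n+1) i⟫ := rfl
    rw [this, inner_stdv]
    ring
  calc _ = ∫ x in closedBall (0 : Euc (n+1)) 1, ∑ i, (2 * ⟪x, stdv (n+1) i⟫) * F i x := by
        congr 1
        ext x
        simp only [F, inner_stdv]
        rw [inner_smul_right, PiLp.inner_apply, Finset.mul_sum, Finset.mul_sum]
        refine Finset.sum_congr rfl fun i _ => ?_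
        simp
        ring
    _ = _ := hsum.symm
    _ = _ := by
      rw [hae]
      apply setIntegral_congr_fun measurableSet_ball
      intro x hx
      simp only [hd]
      rw [← Finset.mul_sum, Finset.sum_add_distrib, ← Finset.mul_sum,
        EuclideanSpace.real_norm_sq_eq (grad v x)]
      have := hharm x hx
      unfold lap at this
      rw [this, mul_zero, add_zero]

/-- the key step in the Frank--Lieb proof of Escobar's inequality. -/
theorem statement12 (n : ℕ) (hn : 2 ≤ n) (u : Euc (n+1) → ℝ) (hu : SmoothNearBall u)
    (hharm : ∀ x ∈ ball (0 : Euc (n+1)) 1, lap u x = 0) :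
    ((∫ x in closedBall (0 : Euc (n+1)) 1, u x * ⟪grad u x, (2:ℝ) • x⟫)
        = ∫ x in closedBall (0 : Euc (n+1)) 1, (1 - ‖x‖^2) * ‖grad u x‖^2)
      ∧ (0 ≤ ∫ x in closedBall (0 : Euc (n+1)) 1, (1 - ‖x‖^2) * ‖grad u x‖^2)
      ∧ ((∀ x ∈ closedBall (0 : Euc (n+1)) 1, 0 < u x) →
          (2/((n:ℝ)-1)) * (∫ x in closedBall (0 : Euc (n+1)) 1, ‖grad u x‖^2)
              ≤ -(∫ x in closedBall (0 : Euc (n+1)) 1, u x * ⟪grad u x, (2:ℝ) • x⟫) →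
          ∀ x ∈ closedBall (0 : Euc (n+1)) 1, ∀ y ∈ closedBall (0 : Euc (n+1)) 1,
            u x = u y) := by
  obtain ⟨v, hv, hvc, huv⟩ := exists_cutoff u hu
  have e0 : ∀ x ∈ closedBall (0 : Euc (n+1)) 1, u x = v x := fun x hx => (huv x hx).eq_of_nhds
  have e1' : ∀ x : Euc (n+1), u =ᶠ[nhds x] v → grad u x = grad v x := fun x hx =>
    hx.gradient_eq
  have e1 : ∀ x ∈ closedBall (0 : Euc (n+1)) 1, grad u x = grad v x := fun x hx =>
    e1' x (huv x hx)
  have hlap : ∀ x ∈ ball (0 : Euc (n+1)) 1, lap v x = 0 := by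
    intro x hx
    rw [← hharm x hx]
    have h2 : gradient u =ᶠ[nhds x] gradient v := by
      filter_upwards [(huv x (ball_subset_closedBall hx)).eventuallyEq_nhds] with y hy
      exact e1' y hy
    unfold lap hess hessVec
    rw [h2.fderiv_eq]
  have hnn : 0 ≤ ∫ x in closedBall (0 : Euc (n+1)) 1, (1 - ‖x‖^2) * ‖grad u x‖^2 := by
    apply setIntegral_nonneg measurableSet_closedBall
    intro x hx
    rw [mem_closedBall_zero_iff] at hx
    have : 0 ≤ 1 - ‖x‖^2 := by nlinarith [norm_nonneg x]
    positivity
  have hid : (∫ x in closedBall (0 : Euc (n+1)) 1, u x * ⟪grad u x, (2:ℝ) • x⟫)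
        = ∫ x in closedBall (0 : Euc (n+1)) 1, (1 - ‖x‖^2) * ‖grad u x‖^2 := by
    calc _ = ∫ x in closedBall (0 : Euc (n+1)) 1, v x * ⟪grad v x, (2:ℝ) • x⟫ :=
          setIntegral_congr_fun measurableSet_closedBall fun x hx => by
            simp only [e0 x hx, e1 x hx]
      _ = _ := main_id n v hv hvc hlap
      _ = _ := setIntegral_congr_fun measurableSet_closedBall fun x hx => by
            simp only [e1 x hx]
  refine ⟨hid, hnn, fun _ hle x hx y hy => ?_⟩
  rw [hid] at hle
  have hn' : (2:ℝ) ≤ n := by exact_mod_cast hn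
  have hpos : 0 < 2 / ((n:ℝ) - 1) := div_pos two_pos (by linarith)
  have hI : (∫ x in closedBall (0 : Euc (n+1)) 1, ‖grad u x‖^2)
      = ∫ x in closedBall (0 : Euc (n+1)) 1, ‖grad v x‖^2 :=
    setIntegral_congr_fun measurableSet_closedBall fun x hx => by simp only [e1 x hx]
  have hI0 : 0 ≤ ∫ x in closedBall (0 : Euc (n+1)) 1, ‖grad v x‖^2 :=
    integral_nonneg fun x => by positivity
  have hz : ∫ x in closedBall (0 : Euc (n+1)) 1, ‖grad v x‖^2 = 0 := by
    rw [hI] at hle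
    refine le_antisymm ?_ hI0
    by_contra hc
    push Not at hc
    have := mul_pos hpos hc
    linarith
  have hgc : Continuous fun x => ‖grad v x‖^2 := (contDiff_grad v hv).continuous.norm.pow 2
  rw [setIntegral_eq_zero_iff_of_nonneg_ae (Filter.Eventually.of_forall fun x => by
    simp only [Pi.zero_apply]; positivity)
    (hgc.continuousOn.integrableOn_compact (isCompact_closedBall _ _))] at hz
  have hE := Measure.eqOn_of_ae_eq hz hgc.continuousOn continuousOn_const (by
    rw [interior_closedBall _ one_ne_zero, closure_ball _ one_ne_zero])
  have hfd : ∀ z ∈ closedBall (0 : Euc (n+1)) 1, ‖fderiv ℝ v z‖ ≤ 0 := by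
    intro z hz
    have h0 : grad v z = 0 := by simpa using hE hz
    have : fderiv ℝ v z = 0 := by
      ext w
      rw [← grad_inner, h0, inner_zero_left]; rfl
    rw [this, norm_zero]
  have := (convex_closedBall (0 : Euc (n+1)) 1).norm_image_sub_le_of_norm_fderiv_le
    (𝕜 := ℝ) (fun z _ => hv.differentiable (by simp) z) hfd hy hx
  rw [zero_mul, norm_le_zero_iff, sub_eq_zero] at this
  rw [e0 x hx, e0 y hy, this]
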